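/- Let f(x) = ½⟨x, H x⟩ + ⟨b, x⟩ + c be quadratic with H ∈ ℝ^{N×N} symmetric positive definite, b ∈ ℝ^N, c ∈ ℝ, so ∇f(x) = H x + b. Let T ∈ ℝ^{N×N} be symmetric with M := T − H symmetric positive definite, let D ∈ ℝ^{N×R} have linearly independent columns, and set Q := T − M D (Dᵀ M D)⁻¹ Dᵀ M. Then for every x̄, x ∈ ℝ^N, with β* := (Dᵀ M D)⁻¹ Dᵀ M (x − x̄) and y_{β*} := x̄ + D β*, one has f(y_{β*}) + ⟨∇f(y_{β*}), x − y_{β*}⟩ + ½‖x − y_{β*}‖_T² = f(x̄) + ⟨∇f(x̄), x − x̄⟩ + ½‖x − x̄‖_Q². In particular, the minimum over β ∈ ℝ^R of the extrapolated proximal objective equals the proximal quasi-Newton objective in the metric Q. -/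

import Mathlib

/-!
Write `u = x - x̄` and `d = D β*`. Expanding the quadratic `f` around `x̄`, the extrapolated
objective at `y = x̄ + d` is

`f x̄ + ⟨∇f x̄, u⟩ + ½ ⟨u, T u⟩ - ⟨d, M u⟩ + ½ ⟨d, M d⟩`,

because all occurrences of `H` and `T` that involve `d` combine into `M = T - H`. The Gram matrix
`Dᵀ M D` is positive definite, hence invertible, so `β*` solves the normal equations
`Dᵀ M d = Dᵀ M u`. Pairing these with `β*` gives `⟨d, M d⟩ = ⟨d, M u⟩`, and the last two terms
become `-½ ⟨d, M u⟩`. By the definition of `Q`, this is exactly `½ ⟨u, Q u⟩ - ½ ⟨u, T u⟩`.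
-/

open Matrix

/-- The extrapolated proximal gradient objective
`f(y) + ⟨∇f(y), x − y⟩ + ½‖x − y‖_T²` evaluated at the extrapolated point `y`. -/
noncomputable def epgObj {N : ℕ} (f : (Fin N → ℝ) → ℝ) (f' : (Fin N → ℝ) → Fin N → ℝ)
    (T : Matrix (Fin N) (Fin N) ℝ) (x y : Fin N → ℝ) : ℝ :=
  f y + f' y ⬝ᵥ (x - y) + 1 / 2 * ((x - y) ⬝ᵥ (T *ᵥ (x - y)))

/-- A symmetric matrix can be moved across the dot product. -/
lemma dotProduct_mulVec_comm_of_isSymm {N : ℕ} {A : Matrix (Fin N) (Fin N) ℝ} (hA : A.IsSymm)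
    (v w : Fin N → ℝ) : v ⬝ᵥ (A *ᵥ w) = w ⬝ᵥ (A *ᵥ v) := by
  rw [dotProduct_mulVec, ← mulVec_transpose, hA.eq, dotProduct_comm]

/-- The normal equations `Dᵀ M D β = Dᵀ M u`, paired with their solution `β`: the step `D β` is
the `M`-orthogonal projection of `u` onto the range of `D`. -/
lemma dotProduct_mulVec_projection {N R : ℕ} {M : Matrix (Fin N) (Fin N) ℝ} (hM : M.PosDef)
    {D : Matrix (Fin N) (Fin R) ℝ} (hD : LinearIndependent ℝ (fun j : Fin R => Dᵀ j))
    (u : Fin N → ℝ) {β : Fin R → ℝ}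
    (hβ : β = (Dᵀ * M * D)⁻¹ *ᵥ (Dᵀ *ᵥ (M *ᵥ u))) :
    (D *ᵥ β) ⬝ᵥ (M *ᵥ (D *ᵥ β)) = (D *ᵥ β) ⬝ᵥ (M *ᵥ u) := by
  have hG : (Dᵀ * M * D).PosDef := by
    have h := hM.conjTranspose_mul_mul_same (mulVec_injective_iff.mpr hD)
    rwa [conjTranspose_eq_transpose_of_trivial] at h
  have hnormal : Dᵀ *ᵥ (M *ᵥ (D *ᵥ β)) = Dᵀ *ᵥ (M *ᵥ u) := by
    have h : (Dᵀ * M * D) *ᵥ β = Dᵀ *ᵥ (M *ᵥ u) := by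
      rw [hβ, mulVec_mulVec, mul_nonsing_inv _ ((isUnit_iff_isUnit_det _).mp hG.isUnit),
        one_mulVec]
    simpa only [mulVec_mulVec, Matrix.mul_assoc] using h
  have hadj (w : Fin N → ℝ) : (D *ᵥ β) ⬝ᵥ w = β ⬝ᵥ (Dᵀ *ᵥ w) := by
    rw [dotProduct_mulVec, vecMul_transpose]
  rw [hadj, hadj, hnormal]

/-- Theorem 4.3 (equivalence with a proximal quasi-Newton step): for a quadratic
`f x = ½⟨x, H x⟩ + ⟨b, x⟩ + c`, `T` symmetric with `M := T − H` symmetric positive definite,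
`D` with linearly independent columns, `Q := T − M D (Dᵀ M D)⁻¹ Dᵀ M`,
`β* := (Dᵀ M D)⁻¹ Dᵀ M (x − x̄)` and `y_{β*} := x̄ + D β*`, one has
`f(y_{β*}) + ⟨∇f(y_{β*}), x − y_{β*}⟩ + ½‖x − y_{β*}‖_T²
  = f(x̄) + ⟨∇f(x̄), x − x̄⟩ + ½‖x − x̄‖_Q²`. -/
theorem epg_equals_quasi_newton {N R : ℕ}
    (H T M : Matrix (Fin N) (Fin N) ℝ) (hH : H.PosDef) (hT : T.IsSymm)
    (hM : M = T - H) (hMpd : M.PosDef)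
    (b : Fin N → ℝ) (c : ℝ)
    (f : (Fin N → ℝ) → ℝ)
    (hf : ∀ z, f z = 1 / 2 * (z ⬝ᵥ (H *ᵥ z)) + b ⬝ᵥ z + c)
    (D : Matrix (Fin N) (Fin R) ℝ)
    (hD : LinearIndependent ℝ (fun j : Fin R => Dᵀ j))
    (Q : Matrix (Fin N) (Fin N) ℝ)
    (hQ : Q = T - M * D * (Dᵀ * M * D)⁻¹ * Dᵀ * M)
    (xb x : Fin N → ℝ)
    (βstar : Fin R → ℝ)
    (hβ : βstar = (Dᵀ * M * D)⁻¹ *ᵥ (Dᵀ *ᵥ (M *ᵥ (x - xb)))) :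
    epgObj f (fun z => H *ᵥ z + b) T x (xb + D *ᵥ βstar)
      = f xb + (H *ᵥ xb + b) ⬝ᵥ (x - xb)
        + 1 / 2 * ((x - xb) ⬝ᵥ (Q *ᵥ (x - xb))) := by
  have hHs : H.IsSymm := by simpa using hH.isHermitian
  have hMs : M.IsSymm := by simpa using hMpd.isHermitian
  obtain ⟨u, rfl⟩ : ∃ u, x = xb + u := ⟨x - xb, by simp⟩
  rw [add_sub_cancel_left] at hβ ⊢
  have hproj := dotProduct_mulVec_projection hMpd hD u hβ
  have hQu : u ⬝ᵥ (Q *ᵥ u) = u ⬝ᵥ (T *ᵥ u) - u ⬝ᵥ (M *ᵥ (D *ᵥ βstar)) := by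
    rw [hQ, hβ, sub_mulVec, dotProduct_sub]
    simp only [mulVec_mulVec, Matrix.mul_assoc]
  rw [hQu]
  generalize D *ᵥ βstar = d at hproj ⊢
  have hTM : T = M + H := by rw [hM, sub_add_cancel]
  have hsub : xb + u - (xb + d) = u - d := by abel
  simp only [epgObj, hf, hsub, hTM, mulVec_add, mulVec_sub, add_mulVec, dotProduct_add,
    dotProduct_sub, add_dotProduct, sub_dotProduct] at hproj ⊢
  -- Each pairing through `H` or `M` is brought to a single orientation, after which the
  -- identity is linear in the remaining scalars.
  rw [dotProduct_comm (H *ᵥ xb) u, dotProduct_comm (H *ᵥ xb) d, dotProduct_comm (H *ᵥ d) u,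
    dotProduct_comm (H *ᵥ d) d]
  have h1 := dotProduct_mulVec_comm_of_isSymm hHs xb d
  have h2 := dotProduct_mulVec_comm_of_isSymm hHs u d
  have h3 := dotProduct_mulVec_comm_of_isSymm hMs u d
  linarith
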